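/- arXiv:1503.05770 — 8 statements merged into one kernel-verified Lean document; each statement's English description precedes it below -/
import Mathlib

section
/- For every point p of the closed long ray, the closed tail {x : p ≤ x} is a closed, sequentially compact subset that is not compact. Consequently the long ray is not a ⊠-space, i.e. it has a closed sequentially compact subset which fails to be compact. -/
/-- The closed long ray: `ω₁ × [0,1)` with the lexicographic order
(`ω₁` being the first uncountable ordinal), equipped with the order topology. -/
abbrev LongRay : Type 1 :=
  {o : Ordinal // o < Ordinal.omega 1} ×ₗ ↥(Set.Ico (0 : ℝ) 1)

noncomputable instance : TopologicalSpace LongRay := Preorder.topology LongRay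

instance : OrderTopology LongRay := ⟨rfl⟩

/-!
A sequence in a linear order has a monotone or an antitone subsequence, which converges in the order
topology as soon as it has a supremum or an infimum. In the long ray every nonempty set has an
infimum, since `ω₁` is well-ordered and infima exist in `[0,1)`; every sequence is bounded above,
since a countable supremum of countable ordinals is countable, and hence monotone sequences have
suprema. Tails are nevertheless unbounded, so they cannot be compact.
-/

open Set Filter Topology

section LinearOrder

variable {X : Type*} [LinearOrder X]

theorem exists_monotone_or_antitone_subseq (u : ℕ → X) :
    ∃ φ : ℕ → ℕ, StrictMono φ ∧ (Monotone (u ∘ φ) ∨ Antitone (u ∘ φ)) := by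
  obtain ⟨φ, hφ⟩ := exists_increasing_or_nonincreasing_subseq (· ≤ ·) u
  refine ⟨φ, φ.strictMono, hφ.imp (fun h ↦ ?_) fun h ↦ ?_⟩
  · exact monotone_nat_of_le_succ fun n ↦ h n (n + 1) n.lt_succ_self
  · exact antitone_nat_of_succ_le fun n ↦ (not_le.1 (h n (n + 1) n.lt_succ_self)).le

variable [TopologicalSpace X] [OrderTopology X]

theorem isSeqCompact_of_isClosed_of_bddBelow
    (hsup : ∀ u : ℕ → X, Monotone u → ∃ a, IsLUB (range u) a)
    (hinf : ∀ u : ℕ → X, Antitone u → BddBelow (range u) → ∃ a, IsGLB (range u) a)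
    {s : Set X} (hs : IsClosed s) (hbdd : BddBelow s) : IsSeqCompact s := by
  intro u hu
  obtain ⟨φ, hφ, hmonotone⟩ := exists_monotone_or_antitone_subseq u
  have hmem (n : ℕ) : (u ∘ φ) n ∈ s := hu (φ n)
  obtain ⟨a, hlim⟩ : ∃ a, Tendsto (u ∘ φ) atTop (𝓝 a) := by
    rcases hmonotone with hmono | hanti
    · exact (hsup _ hmono).imp fun _ ↦ tendsto_atTop_isLUB hmono
    · have hrange : BddBelow (range (u ∘ φ)) := hbdd.mono (range_subset_iff.2 hmem)
      exact (hinf _ hanti hrange).imp fun _ ↦ tendsto_atTop_isGLB hanti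
  exact ⟨a, hs.mem_of_tendsto hlim (.of_forall hmem), φ, hφ, hlim⟩

theorem longRay_tail_closed_seqCompact_not_compact_general [NoMaxOrder X] [Nonempty X]
    (hsup : ∀ u : ℕ → X, Monotone u → ∃ a, IsLUB (range u) a)
    (hinf : ∀ u : ℕ → X, Antitone u → BddBelow (range u) → ∃ a, IsGLB (range u) a) :
    (∀ p : X, IsClosed {x : X | p ≤ x} ∧ IsSeqCompact {x : X | p ≤ x} ∧
      ¬ IsCompact {x : X | p ≤ x}) ∧
    ∃ A : Set X, IsClosed A ∧ IsSeqCompact A ∧ ¬ IsCompact A := by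
  have htail (p : X) : IsClosed (Ici p) ∧ IsSeqCompact (Ici p) ∧ ¬ IsCompact (Ici p) :=
    ⟨isClosed_Ici, isSeqCompact_of_isClosed_of_bddBelow hsup hinf isClosed_Ici bddBelow_Ici,
      fun hcompact ↦ not_bddAbove_Ici p hcompact.bddAbove⟩
  exact ⟨htail, _, htail (Classical.arbitrary X)⟩

end LinearOrder

section Lex

variable {α β : Type*}

theorem isGLB_toLex [PartialOrder α] [Preorder β] {s : Set (α ×ₗ β)} {a : α} {b : β}
    (ha : IsLeast ((fun x ↦ (ofLex x).1) '' s) a) (hb : IsGLB {c | toLex (a, c) ∈ s} b) :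
    IsGLB s (toLex (a, b)) := by
  refine ⟨fun x hx ↦ ?_, fun z hz ↦ ?_⟩
  · rcases (ha.2 (mem_image_of_mem _ hx)).lt_or_eq with hlt | rfl
    · exact Prod.Lex.le_iff.2 (.inl hlt)
    · exact Prod.Lex.le_iff.2 (.inr ⟨rfl, hb.1 hx⟩)
  · obtain ⟨x, hx, rfl⟩ := ha.1
    rcases Prod.Lex.le_iff.1 (hz hx) with hlt | ⟨heq, -⟩
    · exact Prod.Lex.le_iff.2 (.inl hlt)
    · refine Prod.Lex.le_iff.2 (.inr ⟨heq, hb.2 fun c hc ↦ ?_⟩)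
      exact ((Prod.Lex.le_iff.1 (hz hc)).resolve_left heq.not_lt).2

theorem exists_isGLB_lex [LinearOrder α] [WellFoundedLT α] [Preorder β]
    (hβ : ∀ t : Set β, t.Nonempty → ∃ b, IsGLB t b) {s : Set (α ×ₗ β)} (hs : s.Nonempty) :
    ∃ x, IsGLB s x := by
  obtain ⟨a, ha⟩ : ∃ a, IsLeast ((fun x ↦ (ofLex x).1) '' s) a :=
    ⟨_, WellFounded.min_mem wellFounded_lt _ (hs.image _), fun _ ↦ WellFounded.min_le _⟩
  obtain ⟨x, hx, rfl⟩ := ha.1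
  obtain ⟨b, hb⟩ := hβ {c | toLex ((ofLex x).1, c) ∈ s} ⟨(ofLex x).2, hx⟩
  exact ⟨_, isGLB_toLex ha hb⟩

theorem bddAbove_lex_of_bddAbove_image_fst [Preorder α] [NoMaxOrder α] [Preorder β] [Nonempty β]
    {s : Set (α ×ₗ β)} (hs : BddAbove ((fun x ↦ (ofLex x).1) '' s)) : BddAbove s := by
  obtain ⟨a, ha⟩ := hs
  obtain ⟨c, hac⟩ := exists_gt a
  refine ⟨toLex (c, Classical.arbitrary β), fun x hx ↦ ?_⟩
  have hxa : (ofLex x).1 ≤ a := ha (mem_image_of_mem _ hx)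
  exact Prod.Lex.le_iff.2 (.inl (hxa.trans_lt hac))

end Lex

theorem exists_isGLB_of_ordConnected {γ : Type*} [ConditionallyCompleteLinearOrder γ] {I : Set γ}
    [OrdConnected I] {t : Set I} (ht : t.Nonempty) (hbdd : BddBelow t) : ∃ b, IsGLB t b :=
  let _ : Inhabited I := ⟨ht.some⟩
  ⟨sInf t, isGLB_csInf ht hbdd⟩

theorem bddAbove_range_subtype_lt_omega_one {ι : Type*} [Countable ι]
    (u : ι → {o : Ordinal // o < Ordinal.omega 1}) : BddAbove (range u) :=
  ⟨⟨⨆ i, (u i).1, Ordinal.iSup_lt_omega_one fun i ↦ (u i).2⟩,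
    forall_mem_range.2 fun i ↦ Ordinal.le_iSup (fun i ↦ (u i).1) i⟩

instance (o : Ordinal) : NoMaxOrder {a : Ordinal // a < Ordinal.omega o} :=
  (Cardinal.isSuccLimit_omega o).isSuccPrelimit.noMaxOrder_Iio

namespace LongRay

instance : Nonempty LongRay :=
  ⟨toLex (⟨0, Ordinal.omega_pos 1⟩, ⟨0, by simp⟩)⟩

theorem exists_isGLB {s : Set LongRay} (hs : s.Nonempty) : ∃ x, IsGLB s x :=
  exists_isGLB_lex (fun _ ht ↦ exists_isGLB_of_ordConnected ht (OrderBot.bddBelow _)) hs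

theorem bddAbove_range {ι : Type*} [Countable ι] (u : ι → LongRay) : BddAbove (range u) := by
  apply bddAbove_lex_of_bddAbove_image_fst
  rw [← range_comp]
  exact bddAbove_range_subtype_lt_omega_one _

theorem exists_isLUB_range {ι : Type*} [Countable ι] (u : ι → LongRay) :
    ∃ x, IsLUB (range u) x :=
  (exists_isGLB (bddAbove_range u)).imp fun _ ↦ isGLB_upperBounds.1

end LongRay

/-- For every point `p` of the closed long ray, the closed tail `{x | p ≤ x}` is a
closed, sequentially compact subset which is not compact. Consequently, the closed
long ray is not a ⊠-space: it has a closed sequentially compact subset which fails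
to be compact. -/
theorem longRay_tail_closed_seqCompact_not_compact :
    (∀ p : LongRay, IsClosed {x : LongRay | p ≤ x} ∧ IsSeqCompact {x : LongRay | p ≤ x} ∧
      ¬ IsCompact {x : LongRay | p ≤ x}) ∧
    ∃ A : Set LongRay, IsClosed A ∧ IsSeqCompact A ∧ ¬ IsCompact A := by
  exact longRay_tail_closed_seqCompact_not_compact_general
    (fun u _ ↦ LongRay.exists_isLUB_range u) fun u _ _ ↦ LongRay.exists_isGLB (range_nonempty u)
end

section
/- Every continuous real-valued function on the closed long ray is eventually constant: for every continuous f : ℒ → ℝ there exists a point a ∈ ℒ such that f(x) = f(a) for all x ≥ a. -/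
/-!
In a preorder where all sequences have suprema, a continuous `f` oscillates by less than `ε` beyond
some point: otherwise one builds an increasing sequence along which `f` jumps by at least `ε` at
each step, although `f` converges along it to its value at the supremum. Beyond the supremum of the
points obtained for `ε = 1, 1/2, 1/3, …`, `f` is constant. The long ray has suprema of sequences
because countable sets of countable ordinals do, and each fibre `[0,1)` is followed by another one.
-/

open Filter Set Topology

section SequentiallyComplete

variable {X Y : Type*} [Preorder X] [Nonempty X] [TopologicalSpace X] [SupConvergenceClass X]

theorem exists_forall_ge_dist_lt_of_continuous [PseudoMetricSpace Y]
    (hX : ∀ u : ℕ → X, Monotone u → ∃ s, IsLUB (range u) s)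
    {f : X → Y} (hf : Continuous f) {ε : ℝ} (hε : 0 < ε) :
    ∃ a, ∀ x, a ≤ x → dist (f x) (f a) < ε := by
  by_contra! h
  choose next le_next le_dist_next using h
  let u (n : ℕ) : X := next^[n] (Classical.arbitrary X)
  have u_succ (n : ℕ) : u (n + 1) = next (u n) := Function.iterate_succ_apply' ..
  have hu : Monotone u := monotone_nat_of_le_succ fun n ↦ (u_succ n).symm ▸ le_next (u n)
  obtain ⟨s, hs⟩ := hX u hu
  have hfu : Tendsto (fun n ↦ f (u n)) atTop (𝓝 (f s)) :=
    (hf.tendsto s).comp (tendsto_atTop_isLUB hu hs)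
  have hdist : Tendsto (fun n ↦ dist (f (u (n + 1))) (f (u n))) atTop (𝓝 0) := by
    simpa only [dist_self, Function.comp_def] using (hfu.comp (tendsto_add_atTop_nat 1)).dist hfu
  obtain ⟨n, hn⟩ := (hdist.eventually_lt_const hε).exists
  exact (u_succ n ▸ hn).not_ge (le_dist_next (u n))

theorem longRay_continuous_eventually_constant_general [MetricSpace Y]
    (hX : ∀ u : ℕ → X, ∃ s, IsLUB (range u) s) {f : X → Y} (hf : Continuous f) :
    ∃ a, ∀ x, a ≤ x → f x = f a := by
  choose a ha using fun n : ℕ ↦ exists_forall_ge_dist_lt_of_continuous (fun u _ ↦ hX u) hf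
    (Nat.one_div_pos_of_nat (α := ℝ) (n := n))
  obtain ⟨s, hs⟩ := hX a
  have hlim (x : X) (hx : s ≤ x) : Tendsto (fun n ↦ f (a n)) atTop (𝓝 (f x)) := by
    refine tendsto_iff_dist_tendsto_zero.2 <| squeeze_zero (fun _ ↦ dist_nonneg) (fun n ↦ ?_)
      (tendsto_one_div_add_atTop_nhds_zero_nat (𝕜 := ℝ))
    rw [dist_comm]
    exact (ha n x ((hs.1 (mem_range_self n)).trans hx)).le
  exact ⟨s, fun x hx ↦ tendsto_nhds_unique (hlim x hx) (hlim s le_rfl)⟩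

end SequentiallyComplete

section Lex

variable {α β : Type*} {s : Set (α ×ₗ β)} {a : α}

theorem isLUB_toLex_of_isLUB_fiber [PartialOrder α] [Preorder β] {b : β}
    (ha : IsLUB ((fun p ↦ (ofLex p).1) '' s) a) (hb : IsLUB {y | toLex (a, y) ∈ s} b) :
    IsLUB s (toLex (a, b)) := by
  refine ⟨fun p hp ↦ Prod.Lex.le_iff'.2 ⟨ha.1 (mem_image_of_mem _ hp), ?_⟩, fun q hq ↦
    Prod.Lex.le_iff'.2 ⟨ha.2 ?_, ?_⟩⟩
  · rintro rfl
    exact hb.1 hp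
  · exact forall_mem_image.2 fun p hp ↦ Prod.Lex.monotone_fst _ _ (hq hp)
  · rintro rfl
    exact hb.2 fun y hy ↦ (Prod.Lex.le_iff'.1 (hq hy)).2 rfl

theorem isLUB_toLex_succ_bot [PartialOrder α] [SuccOrder α] [NoMaxOrder α] [Preorder β]
    [OrderBot β] (ha : IsLUB ((fun p ↦ (ofLex p).1) '' s) a)
    (hs : ¬ BddAbove {y | toLex (a, y) ∈ s}) : IsLUB s (toLex (Order.succ a, ⊥)) := by
  refine ⟨fun p hp ↦ Prod.Lex.le_iff.2 <| .inl <|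
    Order.lt_succ_of_le (ha.1 (mem_image_of_mem _ hp)), fun q hq ↦ ?_⟩
  have hle : a ≤ (ofLex q).1 :=
    ha.2 <| forall_mem_image.2 fun p hp ↦ Prod.Lex.monotone_fst _ _ (hq hp)
  have hne : a ≠ (ofLex q).1 := by
    rintro rfl
    exact hs ⟨(ofLex q).2, fun y hy ↦ (Prod.Lex.le_iff'.1 (hq hy)).2 rfl⟩
  exact Prod.Lex.le_iff'.2 ⟨Order.succ_le_of_lt (hle.lt_of_ne hne), fun _ ↦ bot_le⟩

theorem exists_isLUB_lex [PartialOrder α] [SuccOrder α] [NoMaxOrder α]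
    [ConditionallyCompleteLattice β] [OrderBot β]
    (ha : IsLUB ((fun p ↦ (ofLex p).1) '' s) a) : ∃ p, IsLUB s p := by
  by_cases hbdd : BddAbove {y | toLex (a, y) ∈ s}
  · obtain hempty | hne := {y | toLex (a, y) ∈ s}.eq_empty_or_nonempty
    · exact ⟨_, isLUB_toLex_of_isLUB_fiber ha (hempty ▸ isLUB_empty)⟩
    · exact ⟨_, isLUB_toLex_of_isLUB_fiber ha (isLUB_csSup hne hbdd)⟩
  · exact ⟨_, isLUB_toLex_succ_bot ha hbdd⟩

end Lex

theorem exists_isLUB_range_of_lt_omega_one {ι : Type*} [Countable ι]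
    (u : ι → {o : Ordinal // o < Ordinal.omega 1}) : ∃ s, IsLUB (range u) s := by
  refine ⟨⟨⨆ i, (u i).1, Ordinal.iSup_lt_omega_one fun i ↦ (u i).2⟩, ?_, fun b hb ↦ ?_⟩
  · exact forall_mem_range.2 (Ordinal.le_iSup fun i ↦ (u i).1)
  · exact Ordinal.iSup_le fun i ↦ hb (mem_range_self i)

instance : Nonempty LongRay := ⟨toLex (⟨0, Ordinal.omega_pos 1⟩, ⟨0, le_rfl, one_pos⟩)⟩

theorem LongRay.exists_isLUB_range_s5 {ι : Type*} [Countable ι] (u : ι → LongRay) :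
    ∃ p, IsLUB (range u) p := by
  let := SuccOrder.ofLinearWellFoundedLT {o : Ordinal.{0} // o < Ordinal.omega 1}
  have : NoMaxOrder {o : Ordinal.{0} // o < Ordinal.omega 1} :=
    (Cardinal.isSuccLimit_omega 1).isSuccPrelimit.noMaxOrder_Iio
  let : Inhabited (Ico (0 : ℝ) 1) := ⟨⊥⟩
  obtain ⟨a, ha⟩ := exists_isLUB_range_of_lt_omega_one fun i ↦ (ofLex (u i)).1
  exact exists_isLUB_lex (by rwa [← range_comp])

/-- Every continuous real-valued function on the closed long ray is eventually
constant. -/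
theorem longRay_continuous_eventually_constant (f : LongRay → ℝ) (hf : Continuous f) :
    ∃ a : LongRay, ∀ x : LongRay, a ≤ x → f x = f a :=
  longRay_continuous_eventually_constant_general LongRay.exists_isLUB_range_s5 hf
end

section
/- Let I be an infinite index set and let ℝ^I carry the product topology. Then every subset of ℝ^I which is discrete in the subspace topology has cardinality at most |I|, and there exists a discrete subset of ℝ^I of cardinality exactly |I| (for instance the set of unit vectors). -/
universe u

/-!
If a space has a basis `B`, each point `x` of a discrete subset `S` is cut out of `S` by a member
of `B`, so `#S ≤ #B`. The preimages of the members of bases of the factors under the coordinate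
projections form a subbasis of a product, and passing from a subbasis to its finite intersections
does not increase an infinite cardinality. Hence an infinite product of `|I|` second-countable
factors has a basis of at most `|I|` sets.

Conversely, changing one coordinate of a base point from outside to inside an open set of that
factor gives `|I|` points which form a discrete subset; for `ℝ` these may be the unit vectors.
-/

universe v

section DiscreteSubsets

open Cardinal Function Set TopologicalSpace

theorem mk_setOf_finite_subset_le {α : Type u} (s : Set α) :
    #{t : Set α | t.Finite ∧ t ⊆ s} ≤ max ℵ₀ #s := by
  classical
  let toSet (l : List s) : Set α := (↑) '' {x | x ∈ l}
  have finite_subset_mem_range : {t : Set α | t.Finite ∧ t ⊆ s} ⊆ range toSet := by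
    rintro t ⟨ht, hts⟩
    lift t to Set s using hts
    obtain ⟨F, rfl⟩ := (ht.of_finite_image Subtype.val_injective.injOn).exists_finset_coe
    exact ⟨F.toList, by simp [toSet]⟩
  calc #{t : Set α | t.Finite ∧ t ⊆ s}
      ≤ #(range toSet) := mk_le_mk_of_subset finite_subset_mem_range
    _ ≤ #(List s) := mk_range_le
    _ ≤ max ℵ₀ #s := mk_list_le_max s

section Subbasis

variable {X : Type u} [t : TopologicalSpace X]

theorem exists_isTopologicalBasis_mk_le_of_subbasis {s : Set (Set X)} (hs : t = generateFrom s) :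
    ∃ B : Set (Set X), IsTopologicalBasis B ∧ #B ≤ max ℵ₀ #s :=
  ⟨_, isTopologicalBasis_of_subbasis hs, mk_image_le.trans (mk_setOf_finite_subset_le s)⟩

theorem singleton_mem_of_isTopologicalBasis {B : Set (Set X)} (hB : IsTopologicalBasis B) {x : X}
    (hx : IsOpen {x}) : {x} ∈ B := by
  obtain ⟨U, hUB, hxU, hU⟩ := hB.exists_subset_of_mem_open (mem_singleton x) hx
  rwa [← hU.antisymm (singleton_subset_iff.2 hxU)]

theorem mk_le_mk_of_isTopologicalBasis [DiscreteTopology X] {B : Set (Set X)}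
    (hB : IsTopologicalBasis B) : #X ≤ #B :=
  have singleton_mem (x : X) : {x} ∈ B :=
    singleton_mem_of_isTopologicalBasis hB (isOpen_discrete {x})
  mk_le_of_injective (singleton_injective.codRestrict singleton_mem)

theorem mk_discrete_le_of_subbasis {s : Set (Set X)} (hs : t = generateFrom s) (S : Set X)
    [DiscreteTopology S] : #S ≤ max ℵ₀ #s := by
  obtain ⟨B, hB, hBs⟩ := exists_isTopologicalBasis_mk_le_of_subbasis hs
  calc #S ≤ #((Subtype.val ⁻¹' · : Set X → Set S) '' B) :=
        mk_le_mk_of_isTopologicalBasis (isTopologicalBasis_subtype hB (· ∈ S))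
    _ ≤ #B := mk_image_le
    _ ≤ max ℵ₀ #s := hBs

end Subbasis

theorem discreteTopology_range_of_isOpen {ι : Type u} {X : Type v} [TopologicalSpace X]
    {x : ι → X} {U : ι → Set X} (hU : ∀ i, IsOpen (U i)) (hx : ∀ i j, x j ∈ U i ↔ j = i) :
    DiscreteTopology (range x) := by
  refine discreteTopology_subtype_iff'.2 ?_
  rintro _ ⟨i, rfl⟩
  refine ⟨U i, hU i, ?_⟩
  ext y
  constructor
  · rintro ⟨hy, j, rfl⟩
    exact congrArg x ((hx i j).1 hy)
  · rintro rfl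
    exact ⟨(hx i i).2 rfl, mem_range_self i⟩

theorem update_mem_preimage_eval_iff {ι : Type u} {X : ι → Type v} [DecidableEq ι]
    {p q : ∀ i, X i} {U : ∀ i, Set (X i)} (hp : ∀ i, p i ∈ U i) (hq : ∀ i, q i ∉ U i) (i j : ι) :
    update q j (p j) ∈ eval i ⁻¹' U i ↔ j = i := by
  obtain rfl | hij := eq_or_ne j i
  · simp [hp]
  · simp [hij, hij.symm, hq]

theorem mk_iUnion_image_preimage_eval_le_sum {ι : Type u} {X : ι → Type v}
    (s : ∀ i, Set (Set (X i))) :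
    #(⋃ i, (eval i ⁻¹' · : Set (X i) → Set (∀ i, X i)) '' s i) ≤ sum fun i ↦ #(s i) := by
  let cylinder (U : Σ i, s i) : Set (∀ i, X i) := eval U.1 ⁻¹' U.2
  have iUnion_subset_range : (⋃ i, (eval i ⁻¹' ·) '' s i) ⊆ range cylinder := by
    refine iUnion_subset fun i ↦ ?_
    rintro _ ⟨U, hU, rfl⟩
    exact ⟨⟨i, U, hU⟩, rfl⟩
  calc #(⋃ i, (eval i ⁻¹' · : Set (X i) → Set (∀ i, X i)) '' s i)
      ≤ #(range cylinder) := mk_le_mk_of_subset iUnion_subset_range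
    _ ≤ #(Σ i, s i) := mk_range_le
    _ = sum fun i ↦ #(s i) := mk_sigma _

section Pi

variable {ι : Type u} {X : ι → Type v} [t : ∀ i, TopologicalSpace (X i)]

theorem pi_eq_generateFrom_iUnion {s : ∀ i, Set (Set (X i))} (hs : ∀ i, t i = generateFrom (s i)) :
    Pi.topologicalSpace = generateFrom (⋃ i, (eval i ⁻¹' ·) '' s i) := by
  simp only [Pi.topologicalSpace, generateFrom_iUnion, ← induced_generateFrom_eq, ← hs]

theorem mk_discrete_pi_le {s : ∀ i, Set (Set (X i))} (hs : ∀ i, t i = generateFrom (s i))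
    {κ : Cardinal.{max u v}} (hκ : ℵ₀ ≤ κ) (hι : lift.{v} #ι ≤ κ)
    (hsκ : ∀ i, lift.{u} #(s i) ≤ κ) (S : Set (∀ i, X i)) [DiscreteTopology S] : #S ≤ κ := by
  refine (mk_discrete_le_of_subbasis (pi_eq_generateFrom_iUnion hs) S).trans (max_le hκ ?_)
  calc #(⋃ i, (eval i ⁻¹' · : Set (X i) → Set (∀ i, X i)) '' s i)
      ≤ sum fun i ↦ #(s i) := mk_iUnion_image_preimage_eval_le_sum s
    _ ≤ lift.{v} #ι * ⨆ i, lift.{u} #(s i) := sum_le_lift_mk_mul_iSup_lift _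
    _ ≤ κ * κ := mul_le_mul' hι (ciSup_le' hsκ)
    _ = κ := mul_eq_self hκ

theorem exists_discrete_pi_mk_eq [∀ i, NontrivialTopology (X i)] :
    ∃ S : Set (∀ i, X i), DiscreteTopology S ∧ #S = lift.{v} #ι := by
  classical
  have exists_separating_open (i : ι) : ∃ U : Set (X i), IsOpen U ∧ (∃ p, p ∈ U) ∧ ∃ q, q ∉ U := by
    obtain ⟨x, y, hxy⟩ :=
      nontrivial_iff_exists_not_inseparable.1 (‹∀ i, NontrivialTopology (X i)› i)
    obtain ⟨U, hU, ⟨hx, hy⟩ | ⟨hy, hx⟩⟩ := not_inseparable_iff_exists_open.1 hxy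
    exacts [⟨U, hU, ⟨x, hx⟩, y, hy⟩, ⟨U, hU, ⟨y, hy⟩, x, hx⟩]
  choose U hU hp hq using exists_separating_open
  choose p hp using hp
  choose q hq using hq
  let x (i : ι) : ∀ i, X i := update q i (p i)
  have hx : ∀ i j, x j ∈ eval i ⁻¹' U i ↔ j = i := update_mem_preimage_eval_iff hp hq
  have x_injective : Injective x := fun i j hij ↦ (hx j i).1 (hij ▸ (hx j j).2 rfl)
  refine ⟨range x, discreteTopology_range_of_isOpen
    (fun i ↦ (hU i).preimage (continuous_apply i)) hx, ?_⟩
  rw [← lift_umax.{u, v}, ← mk_range_eq_of_injective x_injective, lift_id'.{u, v}]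

theorem discrete_subsets_pi_real_general [Infinite ι] [∀ i, NontrivialTopology (X i)]
    {s : ∀ i, Set (Set (X i))} (hs : ∀ i, t i = generateFrom (s i))
    (hsι : ∀ i, lift.{u} #(s i) ≤ lift.{v} #ι) :
    (∀ S : Set (∀ i, X i), DiscreteTopology S → #S ≤ lift.{v} #ι) ∧
      ∃ S : Set (∀ i, X i), DiscreteTopology S ∧ #S = lift.{v} #ι :=
  ⟨fun S _ ↦ mk_discrete_pi_le hs (by simp) le_rfl hsι S, exists_discrete_pi_mk_eq⟩

end Pi

end DiscreteSubsets

/-- For an infinite index set `I`, every discrete subset of the product space `ℝ^I`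
has cardinality at most `|I|`, and there is a discrete subset of cardinality
exactly `|I|`. -/
theorem discrete_subsets_pi_real (I : Type u) [Infinite I] :
    (∀ S : Set (I → ℝ), DiscreteTopology S → Cardinal.mk S ≤ Cardinal.mk I) ∧
    (∃ S : Set (I → ℝ), DiscreteTopology S ∧ Cardinal.mk S = Cardinal.mk I) := by
  have countableBasis_le : Cardinal.lift.{u} (Cardinal.mk (TopologicalSpace.countableBasis ℝ)) ≤
      Cardinal.lift.{0} (Cardinal.mk I) := by
    simpa using (Cardinal.lift_le_aleph0.2
      (TopologicalSpace.countable_countableBasis ℝ).le_aleph0).trans (Cardinal.aleph0_le_mk I)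
  simpa using discrete_subsets_pi_real_general
    (fun _ : I ↦ TopologicalSpace.eq_generateFrom_countableBasis ℝ) fun _ ↦ countableBasis_le
end

section
/- Every connected d-dimensional Hausdorff topological manifold M admits an atlas of at most continuum cardinality: there is a family of at most 2^ℵ₀ open subsets of M, each homeomorphic to an open subset of ℝ^d, which covers M. -/
universe u

/-!
The theorem holds because `M` has at most `𝔠` points, so that one chart around each point suffices.
To bound the number of points, start from one point and close up under two operations: adding a
chart domain around a point already reached, and adding the limit of a sequence of points already
reached. These operations take countably many arguments and have at most `𝔠` values, and
`𝔠 ^ ℵ₀ = 𝔠`, so at most `𝔠` points are ever reached. The set of reached points is open by the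
first operation and (sequentially) closed by the second, hence is all of `M`.
-/

universe v

open Cardinal Set Topology
open Filter (Tendsto atTop mem_of_superset)

theorem cardinalMk_wType_le {α : Type u} {β : α → Type v} {κ : Cardinal.{max u v}} (hκ : ℵ₀ ≤ κ)
    (hα : lift.{v} #α ≤ κ) (hβ : ∀ a, κ ^ lift.{u} #(β a) ≤ κ) : #(WType β) ≤ κ := by
  refine WType.cardinalMk_le_of_le' ?_
  calc sum (fun a => κ ^ lift.{u} #(β a))
      ≤ lift.{v} #α * ⨆ a, κ ^ lift.{u} #(β a) := sum_le_lift_mk_mul_iSup _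
    _ ≤ κ := mul_le_of_le hκ hα (ciSup_le' hβ)

theorem exists_mem_mk_le_forall_seq_subset {X : Type u} {κ : Cardinal.{u}} (hκ : ℵ₀ ≤ κ)
    (hκω : κ ^ ℵ₀ ≤ κ) (T : (ℕ → X) → Set X) (hT : ∀ a, #(T a) ≤ κ) (x₀ : X) :
    ∃ s : Set X, x₀ ∈ s ∧ #s ≤ κ ∧ ∀ a : ℕ → X, (∀ n, a n ∈ s) → T a ⊆ s := by
  have enum (a : ℕ → X) : Nonempty (T a ↪ κ.out) := by
    rw [← Cardinal.le_def, mk_out]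
    exact hT a
  let index (a : ℕ → X) : T a ↪ κ.out := (enum a).some
  -- A tree is a term: a leaf stands for `x₀`, and a node labelled `i` with subterms evaluating to
  -- `a 0, a 1, …` stands for the element of `T a` of index `i`.
  let arity (i : Option κ.out) : Type := i.elim Empty fun _ => ℕ
  let eval : WType arity → X := WType.elim X fun
    | ⟨none, _⟩ => x₀
    | ⟨some i, a⟩ => Function.extend (index a) (↑) (fun _ => x₀) i
  have eval_node (i : κ.out) (t : ℕ → WType arity) : eval (WType.mk (some i) t) =
      Function.extend (index fun n => eval (t n)) (↑) (fun _ => x₀) i := rfl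
  refine ⟨range eval, ⟨WType.mk none Empty.elim, rfl⟩, mk_range_le.trans ?_, ?_⟩
  · refine cardinalMk_wType_le hκ ?_ ?_
    · rw [lift_uzero, mk_option, mk_out]
      exact add_le_of_le hκ le_rfl (one_le_aleph0.trans hκ)
    · rintro (_ | i)
      · simpa [arity] using one_le_aleph0.trans hκ
      · simpa [arity] using hκω
  · intro a ha x hx
    choose subterm hsubterm using ha
    obtain rfl : (fun n => eval (subterm n)) = a := funext hsubterm
    refine ⟨WType.mk (some (index _ ⟨x, hx⟩)) subterm, ?_⟩
    rw [eval_node, (index _).injective.extend_apply]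

theorem mk_le_of_forall_exists_nhds_mk_le {X : Type u} [TopologicalSpace X] [T2Space X]
    [SequentialSpace X] [PreconnectedSpace X] {κ : Cardinal.{u}} (hκ : ℵ₀ ≤ κ)
    (hκω : κ ^ ℵ₀ ≤ κ) (hX : ∀ x : X, ∃ U ∈ 𝓝 x, #U ≤ κ) : #X ≤ κ := by
  obtain _ | ⟨⟨x₀⟩⟩ := isEmpty_or_nonempty X
  · simp
  choose U hU hUκ using hX
  let limits (a : ℕ → X) : Set X := {x | Tendsto a atTop (𝓝 x)}
  have mk_limits_le_one (a : ℕ → X) : #(limits a) ≤ 1 :=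
    mk_le_one_iff_set_subsingleton.2 fun _ hx _ hy => tendsto_nhds_unique hx hy
  obtain ⟨s, hx₀, hsκ, hs⟩ := exists_mem_mk_le_forall_seq_subset hκ hκω
    (fun a => U (a 0) ∪ limits a)
    (fun a => (mk_union_le _ _).trans <|
      add_le_of_le hκ (hUκ _) ((mk_limits_le_one a).trans (one_le_aleph0.trans hκ))) x₀
  have isOpen_s : IsOpen s := isOpen_iff_mem_nhds.2 fun x hx =>
    mem_of_superset (hU x) (subset_union_left.trans (hs (fun _ => x) fun _ => hx))
  have isSeqClosed_s : IsSeqClosed s := fun a _ ha hlim => hs a ha (Or.inr hlim)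
  have s_eq_univ : s = Set.univ := IsClopen.eq_univ ⟨isSeqClosed_s.isClosed, isOpen_s⟩ ⟨x₀, hx₀⟩
  rwa [s_eq_univ, mk_univ] at hsκ

theorem firstCountableTopology_of_forall_exists_isOpen {X : Type*} [TopologicalSpace X]
    (hX : ∀ x : X, ∃ U : Set X, IsOpen U ∧ x ∈ U ∧ FirstCountableTopology U) :
    FirstCountableTopology X := by
  refine ⟨fun x => ?_⟩
  obtain ⟨U, hU, hxU, _⟩ := hX x
  rw [← hU.isOpenEmbedding_subtypeVal.map_nhds_eq ⟨x, hxU⟩]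
  infer_instance

theorem connected_manifold_atlas_card_le_continuum_general {H : Type v} [TopologicalSpace H]
    [FirstCountableTopology H] {κ : Cardinal.{u}} (hκ : ℵ₀ ≤ κ) (hκω : κ ^ ℵ₀ ≤ κ)
    (hH : lift.{u} #H ≤ lift.{v} κ) (M : Type u)
    [TopologicalSpace M] [T2Space M] [PreconnectedSpace M]
    (hM : ∀ x : M, ∃ U : Set M, IsOpen U ∧ x ∈ U ∧
      ∃ V : Set H, IsOpen V ∧ Nonempty (U ≃ₜ V)) :
    ∃ 𝒞 : Set (Set M), #𝒞 ≤ κ ∧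
      (∀ U ∈ 𝒞, IsOpen U ∧ ∃ V : Set H, IsOpen V ∧ Nonempty (U ≃ₜ V)) ∧
      ⋃₀ 𝒞 = Set.univ := by
  choose U hU hxU V hV hUV using hM
  have : FirstCountableTopology M := firstCountableTopology_of_forall_exists_isOpen fun x =>
    ⟨U x, hU x, hxU x, (hUV x).some.isInducing.firstCountableTopology⟩
  have mk_chart_le (x : M) : #(U x) ≤ κ := Cardinal.lift_le.{v}.1 <|
    (lift_mk_le_lift_mk_of_injective (Subtype.val_injective.comp (hUV x).some.injective)).trans hH
  have mk_le : #M ≤ κ := mk_le_of_forall_exists_nhds_mk_le hκ hκω fun x =>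
    ⟨U x, (hU x).mem_nhds (hxU x), mk_chart_le x⟩
  refine ⟨range U, mk_range_le.trans mk_le, ?_, ?_⟩
  · rintro _ ⟨x, rfl⟩
    exact ⟨hU x, V x, hV x, hUV x⟩
  · exact sUnion_eq_univ_iff.2 fun x => ⟨U x, mem_range_self x, hxU x⟩

/-- Every connected `d`-dimensional Hausdorff topological manifold admits an atlas of
at most continuum cardinality: a family of at most `2 ^ ℵ₀` open sets, each
homeomorphic to an open subset of `ℝ^d`, covering `M`. -/
theorem connected_manifold_atlas_card_le_continuum {d : ℕ} (M : Type u)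
    [TopologicalSpace M] [T2Space M] [ConnectedSpace M]
    (hM : ∀ x : M, ∃ U : Set M, IsOpen U ∧ x ∈ U ∧
      ∃ V : Set (Fin d → ℝ), IsOpen V ∧ Nonempty (U ≃ₜ V)) :
    ∃ 𝒞 : Set (Set M), Cardinal.mk 𝒞 ≤ Cardinal.continuum ∧
      (∀ U ∈ 𝒞, IsOpen U ∧ ∃ V : Set (Fin d → ℝ), IsOpen V ∧ Nonempty (↥U ≃ₜ ↥V)) ∧
      ⋃₀ 𝒞 = Set.univ := by
  have mk_le : #(Fin d → ℝ) ≤ 𝔠 :=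
    calc #(Fin d → ℝ) = 𝔠 ^ #(Fin d) := by rw [← power_def, mk_real]
      _ ≤ 𝔠 ^ ℵ₀ := power_le_power_left continuum_ne_zero mk_le_aleph0
      _ = 𝔠 := continuum_power_aleph0
  exact connected_manifold_atlas_card_le_continuum_general aleph0_le_continuum
    continuum_power_aleph0.le (by simpa using mk_le) M hM
end

section
/- Every connected d-dimensional Hausdorff topological manifold M admits an open cover 𝒞 with |𝒞| ≤ 2^ℵ₀ such that each member of 𝒞 is a separable open subset of M and 𝒞 is stable under finite unions (the union of any two members of 𝒞 is again a member of 𝒞). -/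
universe u

/-! The set obtained from a point by repeatedly adjoining limits of convergent sequences, together
with a countable dense subset of a neighbourhood of each limit, is closed because the space is
sequential, and then open because it contains the closures of those countable sets. In a connected
space it is therefore everything. Its elements are the values of well-founded trees with countable
branching and at most `𝔠` labels, and there are only `𝔠 ^ ℵ₀ = 𝔠` of these. So `M` has at most `𝔠`
points, and the finite unions of separable open sets, one chosen around each point, form the
cover. -/

namespace SeparableCover

open Filter Set TopologicalSpace Topology
open Cardinal hiding univ

universe v

section Cardinality

theorem mk_wType_le {J : Type u} {β : J → Type v} {κ : Cardinal.{max u v}} (hκ : ℵ₀ ≤ κ)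
    (hJ : lift.{v} #J ≤ κ) (hpow : ∀ j, κ ^ lift.{u} #(β j) ≤ κ) : #(WType β) ≤ κ :=
  WType.cardinalMk_le_of_le' <| calc
    sum (fun j ↦ κ ^ lift.{u} #(β j)) ≤ lift.{v} #J * ⨆ j, κ ^ lift.{u} #(β j) :=
      sum_le_lift_mk_mul_iSup _
    _ ≤ κ * κ := mul_le_mul' hJ (ciSup_le' hpow)
    _ = κ := mul_eq_self hκ

theorem exists_superset_mk_le_forall_op_mem {X J : Type u} {ι : Type v} (op : J → (ι → X) → X)
    (S : Set X) {κ : Cardinal.{u}} (hκ : ℵ₀ ≤ κ) (hJ : #J ≤ κ)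
    (hpow : lift.{v} κ ^ lift.{u} #ι ≤ lift.{v} κ) (hS : #S ≤ κ) :
    ∃ A, S ⊆ A ∧ #A ≤ κ ∧ ∀ j s, (∀ i, s i ∈ A) → op j s ∈ A := by
  -- The elements of `S` are the nullary operations.
  let β : S ⊕ J → Type v := Sum.elim (fun _ ↦ PEmpty) (fun _ ↦ ι)
  let step : (Σ a, β a → X) → X
    | ⟨.inl x, _⟩ => x
    | ⟨.inr j, s⟩ => op j s
  have mk_trees_le : #(WType β) ≤ lift.{v} κ := by
    refine mk_wType_le (aleph0_le_lift.2 hκ) (lift_le.2 ?_) ?_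
    · simpa only [mk_sum, lift_id] using add_le_of_le hκ hS hJ
    · rintro (_ | _)
      · simpa [β] using one_le_aleph0.trans hκ
      · exact hpow
  refine ⟨range (WType.elim X step), fun x hx ↦ ⟨⟨.inl ⟨x, hx⟩, PEmpty.elim⟩, rfl⟩, ?_, ?_⟩
  · have h := (mk_range_le_lift (f := WType.elim X step)).trans (lift_le.2 mk_trees_le)
    simpa using h
  · intro j s hs
    choose t ht using hs
    exact ⟨⟨.inr j, t⟩, congrArg (op j) (funext ht)⟩

theorem mk_supClosure_le {α : Type u} [SemilatticeSup α] (S : Set α) {κ : Cardinal.{u}}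
    (hκ : ℵ₀ ≤ κ) (hS : #S ≤ κ) : #(supClosure S) ≤ κ := by
  obtain ⟨A, hSA, hA, hsup⟩ := exists_superset_mk_le_forall_op_mem
    (fun (_ : PUnit) (s : Fin 2 → α) ↦ s 0 ⊔ s 1) S hκ
    (by simpa using one_le_aleph0.trans hκ) (by simpa using pow_le hκ ofNat_lt_aleph0) hS
  have hAclosed : SupClosed A := fun a ha b hb ↦
    hsup ⟨⟩ ![a, b] (Fin.forall_fin_two.2 ⟨ha, hb⟩)
  exact (mk_le_mk_of_subset (supClosure_min hSA hAclosed)).trans hA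

theorem exists_subset_range_of_mk_le {X J : Type u} {S : Set X} (hne : S.Nonempty)
    (h : #S ≤ #J) : ∃ f : J → X, S ⊆ range f := by
  obtain ⟨i⟩ := h
  have : Nonempty S := hne.to_subtype
  refine ⟨fun j ↦ (Function.invFun i j : S), fun x hx ↦ ⟨i ⟨x, hx⟩, ?_⟩⟩
  exact congrArg Subtype.val (Function.leftInverse_invFun i.injective ⟨x, hx⟩)

end Cardinality

section Topology

variable {X : Type u} [TopologicalSpace X]

theorem exists_isClopen_superset_mk_le [T2Space X] [SequentialSpace X] {κ : Cardinal.{u}}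
    (hκ : ℵ₀ ≤ κ) (hpow : κ ^ ℵ₀ ≤ κ) (hX : ∀ x : X, ∃ D : Set X, #D ≤ κ ∧ closure D ∈ 𝓝 x)
    (S : Set X) (hS : #S ≤ κ) : ∃ A, S ⊆ A ∧ IsClopen A ∧ #A ≤ κ := by
  obtain rfl | ⟨x₀, -⟩ := S.eq_empty_or_nonempty
  · exact ⟨∅, subset_rfl, isClopen_empty, hS⟩
  have : Nonempty X := ⟨x₀⟩
  choose D hD hDx using hX
  have exists_enum (x : X) : ∃ e : κ.out → X, insert x (D x) ⊆ range e :=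
    exists_subset_range_of_mk_le (insert_nonempty ..) <|
      mk_insert_le.trans <| (add_le_of_le hκ (hD x) (one_le_aleph0.trans hκ)).trans_eq κ.mk_out.symm
  choose e he using exists_enum
  obtain ⟨A, hSA, hAκ, hA⟩ := exists_superset_mk_le_forall_op_mem
    (fun j (s : ℕ → X) ↦ e (limUnder atTop s) j) S hκ κ.mk_out.le (by simpa using hpow) hS
  have insert_subset {s : ℕ → X} {x : X} (hs : ∀ n, s n ∈ A) (hx : Tendsto s atTop (𝓝 x)) :
      insert x (D x) ⊆ A := by
    intro y hy
    obtain ⟨j, rfl⟩ := he x hy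
    simpa only [hx.limUnder_eq] using hA j s hs
  have hclosed : IsClosed A := IsSeqClosed.isClosed fun s x hs hx ↦
    insert_subset hs hx (mem_insert x _)
  have hopen : IsOpen A := isOpen_iff_mem_nhds.2 fun x hx ↦ by
    have hDA : D x ⊆ A :=
      (subset_insert x _).trans (insert_subset (fun _ ↦ hx) tendsto_const_nhds)
    exact mem_of_superset (hDx x) (closure_minimal hDA hclosed)
  exact ⟨A, hSA, ⟨hclosed, hopen⟩, hAκ⟩

theorem mk_le_of_forall_closure_mem_nhds [T2Space X] [SequentialSpace X] [PreconnectedSpace X]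
    {κ : Cardinal.{u}} (hκ : ℵ₀ ≤ κ) (hpow : κ ^ ℵ₀ ≤ κ)
    (hX : ∀ x : X, ∃ D : Set X, #D ≤ κ ∧ closure D ∈ 𝓝 x) : #X ≤ κ := by
  cases isEmpty_or_nonempty X with
  | inl _ => simp
  | inr hne =>
    obtain ⟨x₀⟩ := hne
    obtain ⟨A, hx₀, hA, hAκ⟩ := exists_isClopen_superset_mk_le hκ hpow hX {x₀}
      (by simpa using one_le_aleph0.trans hκ)
    rwa [hA.eq_univ ⟨x₀, hx₀ rfl⟩, mk_univ] at hAκ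

theorem exists_separable_open_cover_supClosed (hX : ∀ x : X, ∃ U ∈ 𝓝 x, IsSeparable U)
    {κ : Cardinal.{u}} (hκ : ℵ₀ ≤ κ) (hXκ : #X ≤ κ) :
    ∃ 𝒞 : Set (Set X), #𝒞 ≤ κ ∧ (∀ U ∈ 𝒞, IsOpen U ∧ IsSeparable U) ∧ SupClosed 𝒞 ∧
      ⋃₀ 𝒞 = univ := by
  choose U hU hUsep using hX
  let B : Set (Set X) := range fun x ↦ interior (U x)
  have hB : B ⊆ {V | IsOpen V ∧ IsSeparable V} := by
    rintro _ ⟨x, rfl⟩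
    exact ⟨isOpen_interior, (hUsep x).mono interior_subset⟩
  have supClosed_open_separable : SupClosed {V : Set X | IsOpen V ∧ IsSeparable V} :=
    fun V hV W hW ↦ ⟨hV.1.union hW.1, hV.2.union hW.2⟩
  refine ⟨supClosure B, mk_supClosure_le B hκ (mk_range_le.trans hXκ),
    supClosure_min hB supClosed_open_separable, supClosed_supClosure, ?_⟩
  exact eq_univ_of_forall fun x ↦
    ⟨interior (U x), subset_supClosure (mem_range_self x), mem_interior_iff_mem_nhds.2 (hU x)⟩

theorem firstCountableTopology_of_forall_exists_mem_nhds
    (hX : ∀ x : X, ∃ U ∈ 𝓝 x, FirstCountableTopology U) : FirstCountableTopology X where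
  nhds_generated_countable x := by
    obtain ⟨U, hU, _⟩ := hX x
    rw [← map_nhds_subtype_coe_eq_nhds (mem_of_mem_nhds hU) hU]
    infer_instance

end Topology

end SeparableCover

open Cardinal TopologicalSpace Topology in
theorem connected_manifold_separable_cover_general (M : Type u) [TopologicalSpace M] [T2Space M]
    [PreconnectedSpace M] [SequentialSpace M] (hM : ∀ x : M, ∃ U ∈ 𝓝 x, IsSeparable U) :
    ∃ 𝒞 : Set (Set M), #𝒞 ≤ 𝔠 ∧ (∀ U ∈ 𝒞, IsOpen U ∧ IsSeparable U) ∧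
      (∀ U ∈ 𝒞, ∀ V ∈ 𝒞, U ∪ V ∈ 𝒞) ∧ ⋃₀ 𝒞 = Set.univ := by
  have hdense (x : M) : ∃ D : Set M, #D ≤ 𝔠 ∧ closure D ∈ 𝓝 x := by
    obtain ⟨U, hU, D, hD, hUD⟩ := hM x
    exact ⟨D, hD.le_aleph0.trans aleph0_le_continuum, Filter.mem_of_superset hU hUD⟩
  have hcard : #M ≤ 𝔠 := SeparableCover.mk_le_of_forall_closure_mem_nhds aleph0_le_continuum
    continuum_power_aleph0.le hdense
  obtain ⟨𝒞, h𝒞, hsep, hsup, hcover⟩ :=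
    SeparableCover.exists_separable_open_cover_supClosed hM aleph0_le_continuum hcard
  exact ⟨𝒞, h𝒞, hsep, fun _ hU _ hV ↦ hsup hU hV, hcover⟩

/-- Every connected `d`-dimensional Hausdorff topological manifold admits an open
cover `𝒞` of at most continuum cardinality consisting of separable open sets, which
is stable under (binary, hence finite) unions. -/
theorem connected_manifold_separable_cover {d : ℕ} (M : Type u)
    [TopologicalSpace M] [T2Space M] [ConnectedSpace M]
    (hM : ∀ x : M, ∃ U : Set M, IsOpen U ∧ x ∈ U ∧
      ∃ V : Set (Fin d → ℝ), IsOpen V ∧ Nonempty (U ≃ₜ V)) :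
    ∃ 𝒞 : Set (Set M), Cardinal.mk 𝒞 ≤ Cardinal.continuum ∧
      (∀ U ∈ 𝒞, IsOpen U ∧ TopologicalSpace.IsSeparable U) ∧
      (∀ U ∈ 𝒞, ∀ V ∈ 𝒞, U ∪ V ∈ 𝒞) ∧
      ⋃₀ 𝒞 = Set.univ := by
  have hM' (x : M) : ∃ U ∈ nhds x, SecondCountableTopology U := by
    obtain ⟨U, hU, hx, V, -, ⟨φ⟩⟩ := hM x
    exact ⟨U, hU.mem_nhds hx, φ.secondCountableTopology⟩
  have : FirstCountableTopology M :=
    SeparableCover.firstCountableTopology_of_forall_exists_mem_nhds fun x ↦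
      (hM' x).imp fun _ ⟨hU, _⟩ ↦ ⟨hU, inferInstance⟩
  exact connected_manifold_separable_cover_general M fun x ↦
    (hM' x).imp fun U ⟨hU, _⟩ ↦ ⟨hU, .of_subtype U⟩
end

section
/- Let M be a connected d-dimensional Hausdorff topological manifold. Then the set of all continuous compactly supported functions f : M → ℝ has cardinality at most 2^ℵ₀. -/
universe u

/-!
The space `M` is reached from a single point by two operations: adjoining, for a point already
reached, a countable set whose closure is a neighbourhood of it, and taking limits of convergent
sequences. A set stable under the second is closed and, if stable under both, also open, hence all
of `M`; and closing a point under at most `𝔠` operations of countable arity yields at most `𝔠`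
points, because `𝔠 ^ ℵ₀ = 𝔠`. A function with compact support vanishes outside the closure of some
countable set `D`, so it is determined by its graph over `D`, which is a sequence in `M × ℝ`.
-/

universe v

open Cardinal Filter Set TopologicalSpace Topology

section CountableArityClosure

/-- Arities of the nodes of the terms generated by one constant (`none`) and an `ι`-indexed family
of operations of arity `ℕ` (`some i`); the type of terms is `WType (termArity ι)`. -/
def termArity (ι : Type u) : Option ι → Type
  | none => Empty
  | some _ => ℕ

variable {ι : Type u} {X : Type u} {κ : Cardinal.{u}}

theorem mk_wType_termArity_le (hκ : ℵ₀ ≤ κ) (hpow : κ ^ ℵ₀ ≤ κ) (hι : #ι ≤ κ) :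
    #(WType (termArity ι)) ≤ κ := by
  have one_le : 1 ≤ κ := one_le_aleph0.trans hκ
  have power_arity_le : ∀ a, κ ^ lift.{u} #(termArity ι a) ≤ κ
    | none => by simpa [termArity] using one_le
    | some _ => by simpa [termArity] using hpow
  refine WType.cardinalMk_le_of_le' ?_
  calc sum (fun a ↦ κ ^ lift.{u} #(termArity ι a))
      ≤ sum (fun _ : Option ι ↦ κ) := sum_le_sum _ _ power_arity_le
    _ = (#ι + 1) * κ := by rw [sum_const', mk_option]
    _ ≤ κ * κ := by gcongr; exact add_le_of_le hκ hι one_le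
    _ = κ := mul_eq_self hκ

theorem exists_mem_mk_le_forall_op_mem (hκ : ℵ₀ ≤ κ) (hpow : κ ^ ℵ₀ ≤ κ) (hι : #ι ≤ κ)
    (op : ι → (ℕ → X) → X) (x₀ : X) :
    ∃ S : Set X, x₀ ∈ S ∧ #S ≤ κ ∧ ∀ i (s : ℕ → X), (∀ n, s n ∈ S) → op i s ∈ S := by
  let eval : WType (termArity ι) → X := WType.elim X fun
    | ⟨none, _⟩ => x₀
    | ⟨some i, s⟩ => op i s
  refine ⟨range eval, ⟨⟨none, Empty.elim⟩, rfl⟩,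
    mk_range_le.trans (mk_wType_termArity_le hκ hpow hι), fun i s hs ↦ ?_⟩
  choose t ht using hs
  obtain rfl : (fun n ↦ eval (t n)) = s := funext ht
  exact ⟨⟨some i, t⟩, rfl⟩

theorem exists_mem_mk_le_forall_subset (hκ : ℵ₀ ≤ κ) (hpow : κ ^ ℵ₀ ≤ κ)
    (F : (ℕ → X) → Set X) (hF : ∀ s, #(F s) ≤ κ) (x₀ : X) :
    ∃ S : Set X, x₀ ∈ S ∧ #S ≤ κ ∧ ∀ s : ℕ → X, (∀ n, s n ∈ S) → F s ⊆ S := by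
  have exists_enumeration : ∀ s, ∃ f : κ.out → X, F s ⊆ range f := fun s ↦ by
    obtain ⟨e⟩ : #(F s) ≤ #κ.out := (hF s).trans_eq κ.mk_out.symm
    exact ⟨Function.extend e Subtype.val fun _ ↦ x₀,
      fun x hx ↦ ⟨e ⟨x, hx⟩, e.injective.extend_apply _ _ _⟩⟩
  choose enum F_subset using exists_enumeration
  obtain ⟨S, hx₀, hS, op_mem⟩ :=
    exists_mem_mk_le_forall_op_mem hκ hpow κ.mk_out.le (fun i s ↦ enum s i) x₀
  refine ⟨S, hx₀, hS, fun s hs ↦ (F_subset s).trans ?_⟩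
  exact range_subset_iff.2 fun i ↦ op_mem i s hs

end CountableArityClosure

section LocallySeparable

/-- A space is locally separable if every point has a separable neighbourhood. -/
class LocallySeparableSpace (X : Type u) [TopologicalSpace X] : Prop where
  exists_mem_nhds_isSeparable : ∀ x : X, ∃ U ∈ 𝓝 x, IsSeparable U

variable {X : Type u} [TopologicalSpace X]

theorem firstCountableTopology_of_exists_mem_nhds
    (h : ∀ x : X, ∃ U ∈ 𝓝 x, FirstCountableTopology U) : FirstCountableTopology X where
  nhds_generated_countable x := by
    obtain ⟨U, hU, _⟩ := h x
    rw [← map_nhds_subtype_coe_eq_nhds (mem_of_mem_nhds hU) hU]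
    infer_instance

theorem locallySeparableSpace_of_exists_mem_nhds
    (h : ∀ x : X, ∃ U ∈ 𝓝 x, SeparableSpace U) : LocallySeparableSpace X where
  exists_mem_nhds_isSeparable x := by
    obtain ⟨U, hU, _⟩ := h x
    exact ⟨U, hU, .of_subtype U⟩

theorem isSeparable_of_isCompact [LocallySeparableSpace X] {K : Set X} (hK : IsCompact K) :
    IsSeparable K := by
  refine hK.induction_on countable_empty.isSeparable (fun _ _ hst ht ↦ ht.mono hst)
    (fun _ _ ↦ IsSeparable.union) fun x _ ↦ ?_
  obtain ⟨U, hU, hUsep⟩ := LocallySeparableSpace.exists_mem_nhds_isSeparable x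
  exact ⟨U, mem_nhdsWithin_of_mem_nhds hU, hUsep⟩

theorem mk_le_continuum_of_locallySeparableSpace (X : Type u) [TopologicalSpace X] [T2Space X]
    [SequentialSpace X] [ConnectedSpace X] [LocallySeparableSpace X] : #X ≤ 𝔠 := by
  have exists_countable_dense_near : ∀ x : X, ∃ D : Set X, D.Countable ∧ closure D ∈ 𝓝 x :=
    fun x ↦ by
      obtain ⟨U, hU, D, hD, hUD⟩ := LocallySeparableSpace.exists_mem_nhds_isSeparable x
      exact ⟨D, hD, mem_of_superset hU hUD⟩
  choose D D_countable closure_D_mem using exists_countable_dense_near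
  let F (s : ℕ → X) : Set X := D (s 0) ∪ {x | Tendsto s atTop (𝓝 x)}
  have F_countable (s : ℕ → X) : (F s).Countable :=
    (D_countable _).union
      (Set.Subsingleton.countable fun _ hx _ hy ↦ tendsto_nhds_unique hx hy)
  obtain ⟨S, x₀_mem, mk_S_le, F_subset⟩ := exists_mem_mk_le_forall_subset aleph0_le_continuum
    continuum_power_aleph0.le F (fun s ↦ (F_countable s).le_aleph0.trans aleph0_le_continuum)
    (Classical.arbitrary X)
  have S_closed : IsClosed S :=
    IsSeqClosed.isClosed fun s _ hs hx ↦ F_subset s hs (Or.inr hx)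
  have S_open : IsOpen S := isOpen_iff_mem_nhds.2 fun x hx ↦
    mem_of_superset (closure_D_mem x) <| closure_minimal
      (subset_union_left.trans (F_subset (fun _ ↦ x) fun _ ↦ hx)) S_closed
  have S_univ : S = Set.univ := IsClopen.eq_univ ⟨S_closed, S_open⟩ ⟨_, x₀_mem⟩
  rwa [S_univ, mk_univ] at mk_S_le

end LocallySeparable

section SeparableSupport

variable {X : Type u} {Y : Type v} [TopologicalSpace X] [TopologicalSpace Y] [T2Space Y] [Zero Y]

theorem eq_of_eqOn_of_support_subset_closure {f g : X → Y} (hf : Continuous f) (hg : Continuous g)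
    {D : Set X} (hfD : f.support ⊆ closure D) (hgD : g.support ⊆ closure D) (h : EqOn f g D) :
    f = g := by
  funext x
  by_cases hx : x ∈ closure D
  · exact h.closure hf hg hx
  · rw [Function.notMem_support.1 fun hxf ↦ hx (hfD hxf),
      Function.notMem_support.1 fun hxg ↦ hx (hgD hxg)]

theorem mk_continuous_isSeparable_support_le (X : Type u) (Y : Type v) [TopologicalSpace X]
    [Nonempty X] [TopologicalSpace Y] [T2Space Y] [Zero Y] :
    #{f : X → Y // Continuous f ∧ IsSeparable f.support} ≤ #(X × Y) ^ ℵ₀ := by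
  have exists_seq (f : {f : X → Y // Continuous f ∧ IsSeparable f.support}) :
      ∃ p : ℕ → X, f.1.support ⊆ closure (range p) := by
    obtain ⟨D, hD, hfD⟩ := f.2.2
    obtain ⟨p, hp⟩ := countable_iff_exists_subset_range.1 hD
    exact ⟨p, hfD.trans (closure_mono hp)⟩
  choose p support_subset using exists_seq
  let sampledGraph (f : {f : X → Y // Continuous f ∧ IsSeparable f.support}) (n : ℕ) : X × Y :=
    (p f n, f.1 (p f n))
  have sampledGraph_injective : Function.Injective sampledGraph := fun f g hfg ↦ by
    have p_eq : p f = p g := funext fun n ↦ congrArg Prod.fst (congrFun hfg n)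
    have eqOn_range : EqOn f.1 g.1 (range (p f)) := by
      rintro _ ⟨n, rfl⟩
      simpa only [sampledGraph, p_eq] using congrArg Prod.snd (congrFun hfg n)
    exact Subtype.ext <| eq_of_eqOn_of_support_subset_closure f.2.1 g.2.1 (support_subset f)
      (p_eq ▸ support_subset g) eqOn_range
  simpa using mk_le_of_injective sampledGraph_injective

end SeparableSupport

theorem card_continuous_compactly_supported_le_continuum_general (X : Type u) (Y : Type v)
    [TopologicalSpace X] [T2Space X] [SequentialSpace X] [ConnectedSpace X]
    [LocallySeparableSpace X] [TopologicalSpace Y] [T2Space Y] [Zero Y] (hY : #Y ≤ 𝔠) :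
    #{f : X → Y // Continuous f ∧ HasCompactSupport f} ≤ 𝔠 := by
  have mk_prod_le : #(X × Y) ≤ 𝔠 := by
    rw [mk_prod, ← continuum_mul_self]
    exact mul_le_mul' (lift_le_continuum.2 (mk_le_continuum_of_locallySeparableSpace X))
      (lift_le_continuum.2 hY)
  calc #{f : X → Y // Continuous f ∧ HasCompactSupport f}
      ≤ #{f : X → Y // Continuous f ∧ IsSeparable f.support} :=
        mk_subtype_le_of_subset fun f hf ↦
          ⟨hf.1, (isSeparable_of_isCompact hf.2.isCompact).mono (subset_tsupport f)⟩
    _ ≤ #(X × Y) ^ ℵ₀ := mk_continuous_isSeparable_support_le X Y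
    _ ≤ 𝔠 ^ ℵ₀ := power_le_power_right mk_prod_le
    _ = 𝔠 := continuum_power_aleph0

/-- On a connected `d`-dimensional Hausdorff topological manifold, the set of
continuous compactly supported real-valued functions has cardinality at most the
continuum. -/
theorem card_continuous_compactly_supported_le_continuum {d : ℕ} (M : Type u)
    [TopologicalSpace M] [T2Space M] [ConnectedSpace M]
    (hM : ∀ x : M, ∃ U : Set M, IsOpen U ∧ x ∈ U ∧
      ∃ V : Set (Fin d → ℝ), IsOpen V ∧ Nonempty (U ≃ₜ V)) :
    Cardinal.mk {f : M → ℝ // Continuous f ∧ HasCompactSupport f} ≤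
      Cardinal.continuum := by
  have secondCountable_near (x : M) : ∃ U ∈ 𝓝 x, SecondCountableTopology U := by
    obtain ⟨U, hU, hxU, V, -, ⟨e⟩⟩ := hM x
    exact ⟨U, hU.mem_nhds hxU, e.secondCountableTopology⟩
  have : FirstCountableTopology M := firstCountableTopology_of_exists_mem_nhds fun x ↦
    let ⟨U, hU, _⟩ := secondCountable_near x
    ⟨U, hU, inferInstance⟩
  have : LocallySeparableSpace M := locallySeparableSpace_of_exists_mem_nhds fun x ↦
    let ⟨U, hU, _⟩ := secondCountable_near x
    ⟨U, hU, inferInstance⟩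
  exact card_continuous_compactly_supported_le_continuum_general M ℝ mk_real.le
end

section
/- Let M be a connected d-dimensional Hausdorff topological manifold. Then there exist an index set I with |I| ≤ 2^ℵ₀ and a topological embedding of M into the product space ℝ^I. -/
/-!
`M` is first countable and completely regular, so it embeds into `ℝ^(M × ℕ)` through one function
for each point and each member of a countable neighbourhood basis at that point. It remains to see
that `M` has at most `2 ^ ℵ₀` points. Since `(2 ^ ℵ₀) ^ ℵ₀ = 2 ^ ℵ₀`, closing up a point under
`2 ^ ℵ₀` operations on sequences produces at most `2 ^ ℵ₀` points. Let these operations send a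
convergent sequence to the points of a chart domain around its limit. The resulting set is
sequentially closed and, by way of constant sequences, open, hence all of `M` by connectedness.
-/

universe u

open Topology Filter Cardinal Set

/-- Arities for the terms built from constants in `A` and from one operation for each `k : K`
taking a sequence of arguments: such terms are the elements of `WType (sequenceArity A K)`. -/
def sequenceArity (A K : Type u) : A ⊕ K → Type :=
  Sum.elim (fun _ ↦ Empty) (fun _ ↦ ℕ)

section SequenceOperations

variable {A K X : Type u} {κ : Cardinal.{u}}

theorem mk_wType_sequenceArity_le (hκ : ℵ₀ ≤ κ) (hpow : κ ^ ℵ₀ ≤ κ) (hA : #A ≤ κ) (hK : #K ≤ κ) :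
    #(WType (sequenceArity A K)) ≤ κ := by
  refine WType.cardinalMk_le_of_le' ?_
  have power_arity_le : ∀ a, κ ^ lift.{u} #(sequenceArity A K a) ≤ κ := by
    rintro (a | k)
    · simpa [sequenceArity] using one_le_aleph0.trans hκ
    · simpa [sequenceArity] using hpow
  calc Cardinal.sum (fun a ↦ κ ^ lift.{u} #(sequenceArity A K a))
      ≤ Cardinal.sum (fun _ : A ⊕ K ↦ κ) := Cardinal.sum_le_sum _ _ power_arity_le
    _ = (#A + #K) * κ := by simp
    _ ≤ (κ + κ) * κ := by gcongr
    _ = κ := by rw [add_eq_self hκ, mul_eq_self hκ]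

theorem exists_superset_mk_le_forall_sequence_mem (hκ : ℵ₀ ≤ κ) (hpow : κ ^ ℵ₀ ≤ κ)
    (hK : #K ≤ κ) (op : K → (ℕ → X) → X) {B : Set X} (hB : #B ≤ κ) :
    ∃ S, B ⊆ S ∧ #S ≤ κ ∧ ∀ k (s : ℕ → X), (∀ n, s n ∈ S) → op k s ∈ S := by
  let interp : WType (sequenceArity B K) → X := WType.elim X fun
    | ⟨.inl b, _⟩ => b
    | ⟨.inr k, s⟩ => op k s
  refine ⟨range interp, fun b hb ↦ ⟨.mk (.inl ⟨b, hb⟩) Empty.elim, rfl⟩,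
    mk_range_le.trans (mk_wType_sequenceArity_le hκ hpow hB hK), fun k s hs ↦ ?_⟩
  choose t ht using hs
  obtain rfl : (fun n ↦ interp (t n)) = s := funext ht
  exact ⟨.mk (.inr k) t, rfl⟩

end SequenceOperations

theorem exists_range_eq_of_mk_le {K X : Type u} {s : Set X} (hs : s.Nonempty) (h : #s ≤ #K) :
    ∃ f : K → X, range f = s := by
  have := hs.to_subtype
  obtain ⟨g⟩ := h
  refine ⟨Subtype.val ∘ Function.invFun g, ?_⟩
  rw [(Function.invFun_surjective g.injective).range_comp, Subtype.range_val]

theorem mk_le_of_forall_exists_mem_nhds_mk_le {X : Type u} [TopologicalSpace X] [T2Space X]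
    [SequentialSpace X] [PreconnectedSpace X] {κ : Cardinal.{u}} (hκ : ℵ₀ ≤ κ) (hpow : κ ^ ℵ₀ ≤ κ)
    (h : ∀ x : X, ∃ U ∈ 𝓝 x, #U ≤ κ) : #X ≤ κ := by
  obtain _ | hX := isEmpty_or_nonempty X
  · simp
  have ⟨x₀⟩ := hX
  have hparam (x : X) : ∃ p : κ.out → X, range p ∈ 𝓝 x := by
    obtain ⟨U, hU, hUκ⟩ := h x
    obtain ⟨p, rfl⟩ := exists_range_eq_of_mk_le ⟨x, mem_of_mem_nhds hU⟩
      (hUκ.trans_eq (mk_out κ).symm)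
    exact ⟨p, hU⟩
  choose p hp using hparam
  obtain ⟨S, hx₀, hSκ, hS⟩ := exists_superset_mk_le_forall_sequence_mem hκ hpow (mk_out κ).le
    (fun k s ↦ p (limUnder atTop s) k) (B := {x₀}) (by simpa using one_le_aleph0.trans hκ)
  have range_subset {s : ℕ → X} {x : X} (hs : ∀ n, s n ∈ S) (hsx : Tendsto s atTop (𝓝 x)) :
      range (p x) ⊆ S := by
    rintro _ ⟨k, rfl⟩
    simpa only [hsx.limUnder_eq] using hS k s hs
  have isClosed_S : IsClosed S :=
    IsSeqClosed.isClosed fun _ x hs hsx ↦ range_subset hs hsx (mem_of_mem_nhds (hp x))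
  have isOpen_S : IsOpen S := isOpen_iff_mem_nhds.2 fun x hx ↦
    mem_of_superset (hp x) (range_subset (fun _ ↦ hx) tendsto_const_nhds)
  have S_eq_univ : S = Set.univ :=
    IsClopen.eq_univ ⟨isClosed_S, isOpen_S⟩ ⟨x₀, hx₀ rfl⟩
  rwa [S_eq_univ, mk_univ] at hSκ

section Embedding

variable {X : Type*} [TopologicalSpace X]

theorem isInducing_pi_of_forall_exists_mem_comap_nhds {ι : Type*} {Y : ι → Type*}
    [∀ i, TopologicalSpace (Y i)] {f : X → ∀ i, Y i} (hf : Continuous f)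
    (hsep : ∀ x, ∀ U ∈ 𝓝 x, ∃ i, U ∈ comap (f · i) (𝓝 (f x i))) : IsInducing f := by
  refine isInducing_iff_nhds.2 fun x ↦ le_antisymm hf.continuousAt.le_comap fun U hU ↦ ?_
  obtain ⟨i, V, hV, hVU⟩ := hsep x U hU
  exact ⟨(· i) ⁻¹' V, (continuous_apply i).continuousAt hV, hVU⟩

theorem exists_continuous_mem_comap_nhds [CompletelyRegularSpace X] {x : X} {U : Set X}
    (hU : U ∈ 𝓝 x) : ∃ f : X → ℝ, Continuous f ∧ U ∈ comap f (𝓝 (f x)) := by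
  obtain ⟨f, hf, hfx, hfU⟩ := CompletelyRegularSpace.completely_regular_isOpen x (interior U)
    isOpen_interior (mem_interior_iff_mem_nhds.2 hU)
  refine ⟨fun y ↦ f y, by fun_prop, {1}ᶜ, isOpen_compl_singleton.mem_nhds (by simp [hfx]), ?_⟩
  refine fun y hy ↦ interior_subset (by_contra fun hyU ↦ hy ?_)
  simp [hfU hyU]

theorem exists_isEmbedding_pi_real (X : Type*) [TopologicalSpace X] [T35Space X]
    [FirstCountableTopology X] : ∃ φ : X → X × ℕ → ℝ, IsEmbedding φ := by
  choose B hB using fun x : X ↦ (𝓝 x).exists_antitone_basis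
  choose f hf hfB using fun i : X × ℕ ↦ exists_continuous_mem_comap_nhds ((hB i.1).mem i.2)
  refine ⟨fun x i ↦ f i x, IsInducing.isEmbedding ?_⟩
  refine isInducing_pi_of_forall_exists_mem_comap_nhds (by fun_prop) fun x U hU ↦ ?_
  obtain ⟨n, hn⟩ := (hB x).mem_iff.1 hU
  exact ⟨(x, n), mem_of_superset (hfB (x, n)) hn⟩

end Embedding

theorem t35Space_of_locallyCompactSpace (X : Type*) [TopologicalSpace X] [T2Space X]
    [LocallyCompactSpace X] : T35Space X :=
  OnePoint.isOpenEmbedding_coe.isEmbedding.t35Space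

section Charts

universe v

variable {H : Type v} {M : Type u} [TopologicalSpace H] [TopologicalSpace M]

theorem nonempty_chartedSpace_of_forall_exists_homeomorph
    (h : ∀ x : M, ∃ U : Set M, IsOpen U ∧ x ∈ U ∧ ∃ V : Set H, IsOpen V ∧ Nonempty (U ≃ₜ V)) :
    Nonempty (ChartedSpace H M) := by
  have hchart (x : M) : ∃ e : OpenPartialHomeomorph M H, x ∈ e.source := by
    obtain ⟨U, hU, hx, V, hV, ⟨e⟩⟩ := h x
    let ιU := TopologicalSpace.Opens.openPartialHomeomorphSubtypeCoe ⟨U, hU⟩ ⟨x, hx⟩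
    let ιV := TopologicalSpace.Opens.openPartialHomeomorphSubtypeCoe ⟨V, hV⟩ ⟨e ⟨x, hx⟩⟩
    refine ⟨ιU.symm.trans (e.toOpenPartialHomeomorph.trans ιV), ?_⟩
    simp [ιU, ιV, hx]
  choose chart hchart using hchart
  exact ⟨{ atlas := range chart
           chartAt := chart
           mem_chart_source := hchart
           chart_mem_atlas := mem_range_self }⟩

variable (H M) [ChartedSpace H M]

theorem firstCountableTopology_of_chartedSpace [FirstCountableTopology H] :
    FirstCountableTopology M where
  nhds_generated_countable x := by
    rw [← (chartAt H x).symm_map_nhds_eq (mem_chart_source H x)]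
    infer_instance

theorem lift_mk_chartAt_source_le (x : M) :
    lift.{v} #(chartAt H x).source ≤ lift.{u} #H :=
  lift_mk_le_lift_mk_of_injective (chartAt H x).injOn.injective

end Charts

theorem mk_pi_real_le_continuum (ι : Type u) [Countable ι] : #(ι → ℝ) ≤ 𝔠 := by
  calc #(ι → ℝ) = 𝔠 ^ #ι := by simp [mk_real]
    _ ≤ 𝔠 ^ ℵ₀ := power_le_power_left continuum_ne_zero mk_le_aleph0
    _ = 𝔠 := continuum_power_aleph0

theorem connected_manifold_embeds_into_pi_real_general (M : Type u) [TopologicalSpace M]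
    [T35Space M] [FirstCountableTopology M] [PreconnectedSpace M] {κ : Cardinal.{u}}
    (hκ : ℵ₀ ≤ κ) (hpow : κ ^ ℵ₀ ≤ κ) (hM : ∀ x : M, ∃ U ∈ 𝓝 x, #U ≤ κ) :
    ∃ (I : Type u) (φ : M → I → ℝ), #I ≤ κ ∧ IsEmbedding φ := by
  obtain ⟨φ, hφ⟩ := exists_isEmbedding_pi_real M
  have mk_M_le : #M ≤ κ := mk_le_of_forall_exists_mem_nhds_mk_le hκ hpow hM
  refine ⟨M × ℕ, φ, ?_, hφ⟩
  calc #(M × ℕ) = #M * ℵ₀ := by simp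
    _ ≤ κ * κ := by gcongr
    _ = κ := mul_eq_self hκ

/-- Every connected `d`-dimensional Hausdorff topological manifold admits a
topological embedding into a product space `ℝ^I` with `|I| ≤ 2 ^ ℵ₀`. -/
theorem connected_manifold_embeds_into_pi_real {d : ℕ} (M : Type u)
    [TopologicalSpace M] [T2Space M] [ConnectedSpace M]
    (hM : ∀ x : M, ∃ U : Set M, IsOpen U ∧ x ∈ U ∧
      ∃ V : Set (Fin d → ℝ), IsOpen V ∧ Nonempty (U ≃ₜ V)) :
    ∃ (I : Type u) (φ : M → I → ℝ),
      Cardinal.mk I ≤ Cardinal.continuum ∧ Topology.IsEmbedding φ := by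
  obtain ⟨_⟩ := nonempty_chartedSpace_of_forall_exists_homeomorph hM
  have := ChartedSpace.locallyCompactSpace (Fin d → ℝ) M
  have := t35Space_of_locallyCompactSpace M
  have := firstCountableTopology_of_chartedSpace (Fin d → ℝ) M
  refine connected_manifold_embeds_into_pi_real_general M aleph0_le_continuum
    continuum_power_aleph0.le fun x ↦ ⟨_, chart_source_mem_nhds (Fin d → ℝ) x, ?_⟩
  simpa using (lift_mk_chartAt_source_le (Fin d → ℝ) M x).trans
    (lift_le.2 (mk_pi_real_le_continuum (Fin d)))
end

section
/- Let X be a locally connected topological space, let I be an infinite index set, and suppose there exists a topological embedding of X into the product space ℝ^I. Then the cardinality of the set of connected components of X is at most |I|. -/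
universe u v

/-!
A family of pairwise disjoint nonempty open sets injects into any basis: send each member to a
nonempty basic open set inside it. So the number of open components is at most the weight of `X`.
Weight is monotone under passing to subspaces, and `ℝ^I` has a subbasis made of countably many sets
per coordinate, hence weight at most `|I|`.
-/

open Set Cardinal TopologicalSpace Topology

universe w

/-- The weight of a topological space: the least cardinality of a basis of its topology. -/
noncomputable def topologicalWeight (X : Type u) [TopologicalSpace X] : Cardinal.{u} :=
  sInf {κ | ∃ B : Set (Set X), IsTopologicalBasis B ∧ #B = κ}

theorem mk_finite_subsets_le {α : Type u} (s : Set α) :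
    #{f : Set α | f.Finite ∧ f ⊆ s} ≤ max ℵ₀ #s := by
  have listed : {f : Set α | f.Finite ∧ f ⊆ s} ⊆
      range fun l : List s ↦ ((↑) '' {x | x ∈ l} : Set α) := by
    rintro f ⟨hf, hfs⟩
    lift f to Set s using hfs
    lift f to Finset s using hf.of_finite_image Subtype.val_injective.injOn
    exact ⟨f.toList, by simp⟩
  exact (mk_le_mk_of_subset listed).trans (mk_range_le.trans (mk_list_le_max s))

section Weight

variable {X : Type u} [t : TopologicalSpace X]

theorem topologicalWeight_le_mk {B : Set (Set X)} (hB : IsTopologicalBasis B) :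
    topologicalWeight X ≤ #B :=
  csInf_le' ⟨B, hB, rfl⟩

variable (X) in
theorem exists_isTopologicalBasis_mk_eq_topologicalWeight :
    ∃ B : Set (Set X), IsTopologicalBasis B ∧ #B = topologicalWeight X :=
  csInf_mem (s := {κ | ∃ B : Set (Set X), IsTopologicalBasis B ∧ #B = κ})
    ⟨_, _, isTopologicalBasis_opens, rfl⟩

variable (X) in
theorem topologicalWeight_le_aleph0 [SecondCountableTopology X] : topologicalWeight X ≤ ℵ₀ :=
  (topologicalWeight_le_mk (isBasis_countableBasis X)).trans (countable_countableBasis X).le_aleph0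

theorem topologicalWeight_le_of_eq_generateFrom {S : Set (Set X)}
    (hS : t = generateFrom S) : topologicalWeight X ≤ max ℵ₀ #S :=
  (topologicalWeight_le_mk (isTopologicalBasis_of_subbasis hS)).trans
    (mk_image_le.trans (mk_finite_subsets_le S))

theorem lift_topologicalWeight_le_of_isInducing {Y : Type v} [TopologicalSpace Y] {f : X → Y}
    (hf : IsInducing f) : lift.{v} (topologicalWeight X) ≤ lift.{u} (topologicalWeight Y) := by
  obtain ⟨B, hB, hBY⟩ := exists_isTopologicalBasis_mk_eq_topologicalWeight Y
  rw [← hBY]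
  exact (lift_le.2 (topologicalWeight_le_mk (hB.isInducing hf))).trans mk_image_le_lift

theorem topologicalWeight_pi_le {I : Type v} (Y : I → Type w) [∀ i, TopologicalSpace (Y i)] :
    topologicalWeight (∀ i, Y i) ≤ max ℵ₀ (sum fun i ↦ topologicalWeight (Y i)) := by
  choose B hB hBY using fun i ↦ exists_isTopologicalBasis_mk_eq_topologicalWeight (Y i)
  let cylinder (p : Σ i, B i) : Set (∀ i, Y i) := Function.eval p.1 ⁻¹' p.2
  have subbasis : Pi.topologicalSpace = generateFrom (range cylinder) := by
    simp only [Pi.topologicalSpace, (hB _).eq_generateFrom, induced_generateFrom_eq,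
      ← generateFrom_iUnion, image_eq_range, cylinder, range_sigma_eq_iUnion_range]
  have card_subbasis : #(range cylinder) ≤ sum fun i ↦ topologicalWeight (Y i) := by
    simpa only [mk_sigma, hBY] using mk_range_le (f := cylinder)
  exact (topologicalWeight_le_of_eq_generateFrom subbasis).trans (max_le_max_left _ card_subbasis)

theorem topologicalWeight_pi_le_max_mk {I : Type v} (Y : I → Type w) [∀ i, TopologicalSpace (Y i)]
    [∀ i, SecondCountableTopology (Y i)] :
    topologicalWeight (∀ i, Y i) ≤ max ℵ₀ (lift.{w} #I) :=
  calc
    topologicalWeight (∀ i, Y i)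
    _ ≤ max ℵ₀ (sum fun i ↦ topologicalWeight (Y i)) := topologicalWeight_pi_le Y
    _ ≤ max ℵ₀ (sum fun _ : I ↦ ℵ₀) :=
      max_le_max_left _ (sum_le_sum _ _ fun i ↦ topologicalWeight_le_aleph0 (Y i))
    _ = max ℵ₀ (lift.{w} #I * ℵ₀) := by rw [sum_const, lift_aleph0]
    _ ≤ max ℵ₀ (lift.{w} #I) :=
      max_le (le_max_left _ _)
        (mul_le_of_le (le_max_left _ _) (le_max_right _ _) (le_max_left _ _))

theorem lift_mk_le_topologicalWeight_of_pairwise_disjoint {ι : Type v} {U : ι → Set X}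
    (hU : ∀ i, IsOpen (U i)) (hne : ∀ i, (U i).Nonempty)
    (hd : Pairwise (Function.onFun Disjoint U)) :
    lift.{u} #ι ≤ lift.{v} (topologicalWeight X) := by
  obtain ⟨B, hB, hBX⟩ := exists_isTopologicalBasis_mk_eq_topologicalWeight X
  choose x hx using hne
  choose b hb hxb hbU using fun i ↦ hB.exists_subset_of_mem_open (hx i) (hU i)
  have inj : Function.Injective fun i ↦ (⟨b i, hb i⟩ : B) := by
    intro i j hij
    have hij : b i = b j := congrArg Subtype.val hij
    exact hd.eq (not_disjoint_iff.2 ⟨x i, hx i, hbU j (hij ▸ hxb i)⟩)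
  rw [← hBX]
  exact lift_mk_le_lift_mk_of_injective inj

variable (X) in
theorem mk_connectedComponents_le_topologicalWeight [DiscreteTopology (ConnectedComponents X)] :
    #(ConnectedComponents X) ≤ topologicalWeight X := by
  simpa only [lift_id] using lift_mk_le_topologicalWeight_of_pairwise_disjoint
    (fun c : ConnectedComponents X ↦
      (isOpen_discrete {c}).preimage ConnectedComponents.continuous_coe)
    (fun c ↦ (singleton_nonempty c).preimage ConnectedComponents.surjective_coe)
    (pairwise_disjoint_fiber _)

end Weight

theorem card_connectedComponents_le_of_embedding_general {X : Type u} {I : Type v} {Y : I → Type w}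
    [TopologicalSpace X] [DiscreteTopology (ConnectedComponents X)]
    [∀ i, TopologicalSpace (Y i)] [∀ i, SecondCountableTopology (Y i)]
    {φ : X → ∀ i, Y i} (hφ : IsInducing φ) :
    lift.{max v w} #(ConnectedComponents X) ≤ max ℵ₀ (lift.{max u w} #I) :=
  calc
    lift.{max v w} #(ConnectedComponents X)
    _ ≤ lift.{max v w} (topologicalWeight X) :=
      lift_le.2 (mk_connectedComponents_le_topologicalWeight X)
    _ ≤ lift.{u} (topologicalWeight (∀ i, Y i)) := lift_topologicalWeight_le_of_isInducing hφ
    _ ≤ lift.{u} (max ℵ₀ (lift.{w} #I)) := lift_le.2 (topologicalWeight_pi_le_max_mk Y)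
    _ = max ℵ₀ (lift.{max u w} #I) := by rw [lift_max, lift_aleph0, lift_lift]

/-- If a locally connected topological space `X` embeds topologically into `ℝ^I`
for an infinite index set `I`, then the number of connected components of `X` is
at most `|I|`. -/
theorem card_connectedComponents_le_of_embedding (X : Type u) (I : Type v)
    [TopologicalSpace X] [LocallyConnectedSpace X] [Infinite I]
    (φ : X → I → ℝ) (hφ : Topology.IsEmbedding φ) :
    Cardinal.lift.{v} (Cardinal.mk (ConnectedComponents X)) ≤
      Cardinal.lift.{u} (Cardinal.mk I) := by
  simpa using card_connectedComponents_le_of_embedding_general hφ.isInducing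
end
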